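/- Let G be a finite simple graph on n vertices, let r ≥ 1, and let L assign to each vertex v of G a set L(v) ⊆ {1, …, r} of admissible colors. Let G′ be the graph obtained from G by adding r new vertices u_1, …, u_r forming a complete graph, and adding an edge between u_i and a vertex v of G whenever i ∉ L(v). Then G admits a proper coloring φ with φ(v) ∈ L(v) for every vertex v and with every color class of size ⌊n/r⌋ or ⌈n/r⌉, if and only if G′ admits an equitable r-coloring. -/

import Mathlib

/-- `φ` is a proper coloring of the simple graph `G`. -/
def IsProperColoring {V : Type*} {k : ℕ} (G : SimpleGraph V) (φ : V → Fin k) : Prop :=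
  ∀ u v : V, G.Adj u v → φ u ≠ φ v

/-- Every color class of `φ` has size `⌊n/k⌋` or `⌈n/k⌉`, where `n` is the number of
vertices. -/
def IsEquitable {V : Type*} [Fintype V] {k : ℕ} (φ : V → Fin k) : Prop :=
  ∀ i : Fin k,
    (Finset.univ.filter fun v => φ v = i).card = Fintype.card V / k ∨
    (Finset.univ.filter fun v => φ v = i).card = (Fintype.card V + k - 1) / k

/-- The graph obtained from `G` by adding `r` new vertices `u_1, …, u_r` forming a clique,
with an edge between `u_i` and a vertex `v` of `G` whenever `i ∉ L v`. -/
def listGadgetGraph {V : Type*} (G : SimpleGraph V) {r : ℕ} (L : V → Set (Fin r)) :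
    SimpleGraph (V ⊕ Fin r) :=
  SimpleGraph.fromRel fun a b =>
    match a, b with
    | Sum.inl u, Sum.inl v => G.Adj u v
    | Sum.inl v, Sum.inr i => i ∉ L v
    | Sum.inr i, Sum.inl v => i ∉ L v
    | Sum.inr _, Sum.inr _ => True

/-- Adding one vertex to each color class, and permuting the colors, preserves equitability. -/
theorem isEquitable_sumElim_perm_iff {V : Type*} [Fintype V] {r : ℕ} (hr : 1 ≤ r)
    (φ : V → Fin r) (τ : Equiv.Perm (Fin r)) :
    IsEquitable (Sum.elim (τ ∘ φ) τ) ↔ IsEquitable φ := by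
  have hcard (i : Fin r) :
      (Finset.univ.filter fun x => Sum.elim (τ ∘ φ) τ x = τ i).card =
        (Finset.univ.filter fun v => φ v = i).card + 1 := by
    simp only [Finset.card_filter, Fintype.sum_sum_type]
    simp
  have hfloor : Fintype.card (V ⊕ Fin r) / r = Fintype.card V / r + 1 := by
    rw [Fintype.card_sum, Fintype.card_fin, Nat.add_div_right _ hr]
  have hceil : (Fintype.card (V ⊕ Fin r) + r - 1) / r = (Fintype.card V + r - 1) / r + 1 := by
    rw [Fintype.card_sum, Fintype.card_fin, ← Nat.add_div_right _ hr]
    congr 1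
    omega
  unfold IsEquitable
  rw [← τ.forall_congr_right]
  simp only [hcard, hfloor, hceil, Nat.add_right_cancel_iff]

/-- A coloring of the gadget graph that is bijective on the clique is proper if and only if,
after renaming colors so that each `u_i` has color `i`, it is proper on `G` and respects `L`. -/
theorem isProperColoring_listGadgetGraph_iff {V : Type*} (G : SimpleGraph V) {r : ℕ}
    (L : V → Set (Fin r)) (φ : V → Fin r) (τ : Equiv.Perm (Fin r)) :
    IsProperColoring (listGadgetGraph G L) (Sum.elim (τ ∘ φ) τ) ↔
      IsProperColoring G φ ∧ ∀ v, φ v ∈ L v := by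
  constructor
  · refine fun h => ⟨fun u v huv heq => ?_, fun v => ?_⟩
    · exact h (Sum.inl u) (Sum.inl v) (by simp [listGadgetGraph, huv, huv.ne]) (by simp [heq])
    · by_contra hv
      exact h (Sum.inl v) (Sum.inr (φ v)) (by simp [listGadgetGraph, hv]) (by simp)
  · rintro ⟨hG, hL⟩ (u | i) (v | j) hadj heq
    · simp only [listGadgetGraph, SimpleGraph.fromRel_adj, G.adj_comm v u, or_self] at hadj
      exact hG u v hadj.2 (by simpa using heq)
    · obtain rfl : φ u = j := by simpa using heq
      simp [listGadgetGraph, hL u] at hadj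
    · obtain rfl : i = φ v := by simpa using heq
      simp [listGadgetGraph, hL v] at hadj
    · exact hadj.ne (congrArg Sum.inr (τ.injective heq))

/-- `G` admits a proper coloring respecting the list assignment `L` with all color classes
of size `⌊n/r⌋` or `⌈n/r⌉` if and only if the gadget graph `G'` (obtained from `G` by
adding an `r`-clique simulating the lists) admits an equitable `r`-coloring. -/
theorem stmt12 {V : Type*} [Fintype V] (G : SimpleGraph V) (r : ℕ) (hr : 1 ≤ r)
    (L : V → Set (Fin r)) :
    (∃ φ : V → Fin r, IsProperColoring G φ ∧ (∀ v : V, φ v ∈ L v) ∧ IsEquitable φ) ↔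
    (∃ ψ : V ⊕ Fin r → Fin r,
      IsProperColoring (listGadgetGraph G L) ψ ∧ IsEquitable ψ) := by
  constructor
  · rintro ⟨φ, hφ, hL, heq⟩
    exact ⟨Sum.elim (Equiv.refl _ ∘ φ) (Equiv.refl _),
      (isProperColoring_listGadgetGraph_iff G L φ _).2 ⟨hφ, hL⟩,
      (isEquitable_sumElim_perm_iff hr φ _).2 heq⟩
  · rintro ⟨ψ, hψ, heq⟩
    have hinj : Function.Injective (ψ ∘ Sum.inr) := fun i j hij => by
      by_contra hne
      exact hψ (Sum.inr i) (Sum.inr j) (by simp [listGadgetGraph, hne]) hij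
    let τ : Equiv.Perm (Fin r) := Equiv.ofBijective _ (Finite.injective_iff_bijective.1 hinj)
    have hdecomp : ψ = Sum.elim (τ ∘ (τ.symm ∘ ψ ∘ Sum.inl)) τ := by
      ext (v | i)
      · simp
      · simp [τ]
    rw [hdecomp] at hψ heq
    obtain ⟨hφ, hL⟩ := (isProperColoring_listGadgetGraph_iff G L _ τ).1 hψ
    exact ⟨_, hφ, hL, (isEquitable_sumElim_perm_iff hr _ τ).1 heq⟩
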